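/- arXiv:1603.08433 — 4 statements merged into one kernel-verified Lean document; each statement's English description precedes it below -/
import Mathlib

section
/- Let Γ be a finite simple graph. Then Γ belongs to the class 𝒩ℬ if and only if Γ belongs to the class 𝒢𝒫; that is, Γ has no three distinct vertices a, b, c with a adjacent to b and c adjacent to neither a nor b, if and only if Γ admits a commuting partition. -/
/-!
The condition defining `InNB` says exactly that non-adjacency is a transitive relation; being always
reflexive and symmetric, it is then an equivalence relation, and distinct classes are completely
joined to each other. A vertex adjacent to every other one is a singleton class. Collecting all
these vertices into `P 0` and numbering the classes of the remaining vertices (finitely many)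
by `1, …, n` gives a commuting partition. Conversely, in a commuting partition non-adjacent vertices
share a part, so an edge `a b` with `c` adjacent to neither would lie, with `c`, in a single part:
impossible for `P 0`, whose vertices are adjacent to `c`, and for the other parts, which are
independent.
-/


/-- Γ is in the class 𝒩ℬ: there are no three distinct vertices `a, b, c`
such that `a` and `b` are adjacent while `c` is adjacent to neither. -/
def InNB {V : Type*} (Γ : SimpleGraph V) : Prop :=
  ¬ ∃ a b c : V, a ≠ b ∧ a ≠ c ∧ b ≠ c ∧ Γ.Adj a b ∧ ¬ Γ.Adj a c ∧ ¬ Γ.Adj b c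

/-- `P : Fin (n+1) → Set V` is a commuting partition of `Γ`:
it is a partition of the vertices, all parts except possibly `P 0` are nonempty,
`P 0` is exactly the set of vertices adjacent to every other vertex (eccentricity one),
distinct vertices in a common part `P k` for `k ≥ 1` are non-adjacent,
and vertices in distinct parts are adjacent. -/
def IsCommutingPartition {V : Type*} (Γ : SimpleGraph V) (n : ℕ)
    (P : Fin (n + 1) → Set V) : Prop :=
  (∀ v : V, ∃! i : Fin (n + 1), v ∈ P i) ∧
  (∀ i : Fin (n + 1), i ≠ 0 → (P i).Nonempty) ∧
  (P 0 = {v : V | ∀ w : V, w ≠ v → Γ.Adj v w}) ∧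
  (∀ i : Fin (n + 1), i ≠ 0 → ∀ u ∈ P i, ∀ v ∈ P i, u ≠ v → ¬ Γ.Adj u v) ∧
  (∀ i j : Fin (n + 1), i ≠ j → ∀ u ∈ P i, ∀ v ∈ P j, Γ.Adj u v)

/-- Non-adjacency as an equivalence relation, for a graph in 𝒩ℬ. -/
def nonAdjSetoid {V : Type*} (Γ : SimpleGraph V) (h : InNB Γ) : Setoid V where
  r u v := ¬ Γ.Adj u v
  iseqv :=
    { refl := fun v => Γ.irrefl
      symm := fun huv hvu => huv hvu.symm
      trans := by
        intro u v w huv hvw huw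
        have hwv : ¬ Γ.Adj w v := fun hwv => hvw hwv.symm
        refine h ⟨u, w, v, huw.ne, ?_, ?_, huw, huv, hwv⟩
        · rintro rfl
          exact hvw huw
        · rintro rfl
          exact huv huw }

theorem nb_of_commuting_partition {V : Type*} {Γ : SimpleGraph V} {n : ℕ}
    {P : Fin (n + 1) → Set V} (hP : IsCommutingPartition Γ n P) : InNB Γ := by
  obtain ⟨hpart, -, hzero, hindep, hjoin⟩ := hP
  have same_part : ∀ {i j : Fin (n + 1)} {u v : V}, u ∈ P i → v ∈ P j → ¬ Γ.Adj u v → i = j :=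
    fun hu hv huv => by_contra fun hij => huv (hjoin _ _ hij _ hu _ hv)
  rintro ⟨a, b, c, hab, hac, -, adj_ab, nadj_ac, nadj_bc⟩
  obtain ⟨i, ha, -⟩ := hpart a
  obtain ⟨j, hb, -⟩ := hpart b
  obtain ⟨k, hc, -⟩ := hpart c
  obtain rfl := same_part ha hc nadj_ac
  obtain rfl := same_part hb hc nadj_bc
  by_cases hj : j = 0
  · subst hj
    rw [hzero] at ha
    exact nadj_ac (ha c hac.symm)
  · exact hindep j hj a ha b hb hab adj_ab

open Classical in
theorem exists_commuting_partition {V : Type*} [Finite V] {Γ : SimpleGraph V} (h : InNB Γ) :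
    ∃ (n : ℕ) (P : Fin (n + 1) → Set V), IsCommutingPartition Γ n P := by
  let D : Set V := {v | ∀ w, w ≠ v → Γ.Adj v w}
  let S : Setoid {v // v ∉ D} := (nonAdjSetoid Γ h).comap Subtype.val
  obtain ⟨n, ⟨e⟩⟩ := Finite.exists_equiv_fin (Quotient S)
  let f : V → Fin (n + 1) := fun v =>
    if hv : v ∈ D then 0 else (e (Quotient.mk S ⟨v, hv⟩)).succ
  have f_dom : ∀ {v}, v ∈ D → f v = 0 := fun hv => dif_pos hv
  have f_nondom : ∀ {v} (hv : v ∉ D), f v = (e (Quotient.mk S ⟨v, hv⟩)).succ :=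
    fun hv => dif_neg hv
  have f_eq_zero : ∀ {v}, f v = 0 ↔ v ∈ D := by
    refine fun {v} => ⟨fun hf => ?_, f_dom⟩
    by_contra hv
    exact Fin.succ_ne_zero _ ((f_nondom hv).symm.trans hf)
  have f_eq : ∀ {u v} (_ : u ∉ D) (_ : v ∉ D), f u = f v ↔ ¬ Γ.Adj u v := by
    intro u v hu hv
    rw [f_nondom hu, f_nondom hv, Fin.succ_inj, e.apply_eq_iff_eq, Quotient.eq]
    rfl
  refine ⟨n, fun i => {v | f v = i}, fun v => ⟨f v, rfl, fun _ hi => hi.symm⟩, ?_, ?_, ?_, ?_⟩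
  · intro i hi
    obtain ⟨j, rfl⟩ := Fin.exists_succ_eq.mpr hi
    obtain ⟨⟨v, hv⟩, hvj⟩ := Quotient.exists_rep (e.symm j)
    refine ⟨v, (f_nondom hv).trans ?_⟩
    rw [hvj, e.apply_symm_apply]
  · ext v
    exact f_eq_zero
  · rintro i hi u rfl v hv -
    have hu : u ∉ D := mt f_eq_zero.mpr hi
    have hv' : v ∉ D := fun hvD => hi (hv.symm.trans (f_dom hvD))
    exact (f_eq hu hv').mp hv.symm
  · rintro i j hij u rfl v rfl
    have huv : u ≠ v := fun huv => hij (congrArg f huv)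
    by_cases hu : u ∈ D
    · exact hu v huv.symm
    by_cases hv : v ∈ D
    · exact (hv u huv).symm
    exact by_contra fun hadj => hij ((f_eq hu hv).mpr hadj)

theorem nb_iff_commuting_partition {V : Type*} [Fintype V] (Γ : SimpleGraph V) :
    InNB Γ ↔ ∃ (n : ℕ) (P : Fin (n + 1) → Set V), IsCommutingPartition Γ n P :=
  ⟨exists_commuting_partition, fun ⟨_, _, hP⟩ => nb_of_commuting_partition hP⟩
end

section
/- Let Γ be a finite simple graph in 𝒩ℬ. Then the binary relation on the vertices of Γ defined by 'u = v or u is not adjacent to v' is an equivalence relation; in particular it is transitive: if u is not adjacent to v, v is not adjacent to w, and u ≠ w, then u is not adjacent to w. -/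
theorem nonadjacency_equivalence {V : Type*} [Fintype V] (Γ : SimpleGraph V)
    (hΓ : InNB Γ) :
    Equivalence (fun u v : V => u = v ∨ ¬ Γ.Adj u v) ∧
      (∀ u v w : V, ¬ Γ.Adj u v → ¬ Γ.Adj v w → u ≠ w → ¬ Γ.Adj u w) := by
  have trans : ∀ u v w : V, ¬ Γ.Adj u v → ¬ Γ.Adj v w → ¬ Γ.Adj u w := by
    intro u v w huv hvw huw
    -- If `v` were `u` or `w`, the edge `uw` would be one of the two assumed non-edges;
    -- otherwise `u, w, v` is the forbidden edge plus isolated vertex.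
    refine hΓ ⟨u, w, v, huw.ne, ?_, ?_, huw, huv, fun h => hvw h.symm⟩
    · rintro rfl
      exact hvw huw
    · rintro rfl
      exact huv huw
  refine ⟨⟨fun u => Or.inl rfl, ?_, ?_⟩, fun u v w huv hvw _ => trans u v w huv hvw⟩
  · rintro u v (rfl | h)
    · exact Or.inl rfl
    · exact Or.inr fun h' => h h'.symm
  · rintro u v w (rfl | huv) (rfl | hvw)
    · exact Or.inl rfl
    · exact Or.inr hvw
    · exact Or.inr huv
    · exact Or.inr (trans u v w huv hvw)
end

section
/- Let Γ be a finite simple graph admitting a commuting partition P₀, P₁, …, Pₙ. Then the graph group G(Γ) is isomorphic to the direct product ℤ^{|P₀|} × F_{|P₁|} × ⋯ × F_{|Pₙ|}, where F_k denotes the free group of rank k and ℤ^{|P₀|} the free abelian group of rank |P₀|. -/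
/-!
The isomorphism is the evident one on generators: a vertex of `P 0` goes to the corresponding
standard basis vector of the free abelian factor, and a vertex of `P i.succ` to the corresponding
free generator of the `i`-th free factor. The map `GraphGroup.toProd` is well defined because two
adjacent vertices never lie in the same part `P i.succ`, so their images commute in each free
factor. The map `GraphGroup.ofProd` in the other direction combines the universal properties of
`ℤ` and of the free groups; it is well defined because vertices of distinct parts are adjacent and
distinct vertices of `P 0` are adjacent, so that the images of the factors commute pairwise. The
two homomorphisms are mutually inverse since they are so on generators
(`GraphGroup.toProd_ofProd`, `GraphGroup.ofProd_toProd`).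
-/

/-- The defining relators of the graph group (right-angled Artin group) of `Γ`:
one commutator for each pair of adjacent vertices. -/
def graphGroupRels {V : Type*} (Γ : SimpleGraph V) : Set (FreeGroup V) :=
  {r | ∃ u v : V, Γ.Adj u v ∧
    r = FreeGroup.of u * FreeGroup.of v * (FreeGroup.of u)⁻¹ * (FreeGroup.of v)⁻¹}

/-- The graph group (right-angled Artin group) of a simple graph `Γ`, presented with
one generator per vertex and commuting relations for adjacent vertices. -/
def GraphGroup {V : Type*} (Γ : SimpleGraph V) : Type _ :=
  PresentedGroup (graphGroupRels Γ)

instance {V : Type*} (Γ : SimpleGraph V) : Group (GraphGroup Γ) :=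
  inferInstanceAs (Group (PresentedGroup (graphGroupRels Γ)))

namespace GraphGroup

variable {V : Type*} {Γ : SimpleGraph V}

/-- The standard generator of the graph group attached to the vertex `v`. -/
def gen (Γ : SimpleGraph V) (v : V) : GraphGroup Γ :=
  PresentedGroup.of (rels := graphGroupRels Γ) v

theorem commute_gen {u v : V} (h : Γ.Adj u v) : Commute (gen Γ u) (gen Γ v) := by
  have h1 : PresentedGroup.mk (graphGroupRels Γ)
      (FreeGroup.of u * FreeGroup.of v * (FreeGroup.of u)⁻¹ * (FreeGroup.of v)⁻¹) = 1 :=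
    PresentedGroup.one_of_mem ⟨u, v, h, rfl⟩
  simp only [map_mul, map_inv] at h1
  exact mul_inv_eq_iff_eq_mul.1 (mul_inv_eq_one.1 h1)

/-- The universal property of the graph group: existence of homomorphisms. -/
def lift {H : Type*} [Group H] (f : V → H) (hf : ∀ u v, Γ.Adj u v → Commute (f u) (f v)) :
    GraphGroup Γ →* H :=
  PresentedGroup.toGroup (rels := graphGroupRels Γ) (f := f) (by
    rintro r ⟨u, v, h, rfl⟩
    simp [(hf u v h).eq])

@[simp] theorem lift_gen {H : Type*} [Group H] (f : V → H)
    (hf : ∀ u v, Γ.Adj u v → Commute (f u) (f v)) (v : V) : lift f hf (gen Γ v) = f v :=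
  PresentedGroup.toGroup.of _

/-- The universal property of the graph group: uniqueness of homomorphisms. -/
theorem hom_ext {H : Type*} [Group H] {f g : GraphGroup Γ →* H}
    (h : ∀ v, f (gen Γ v) = g (gen Γ v)) : f = g :=
  PresentedGroup.ext (rels := graphGroupRels Γ) h

theorem commute_freeGroup_lift {α H : Type*} [Group H] (a : α → H) (y : H)
    (h : ∀ i, Commute (a i) y) (x : FreeGroup α) : Commute (FreeGroup.lift a x) y := by
  refine FreeGroup.induction_on x ?_ ?_ ?_ ?_
  · simp
  · intro i
    simpa using h i
  · intro i _
    simpa using h i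
  · intro x y hx hy
    simpa using hx.mul_left hy

/-- Homomorphisms out of a finite product are determined by their restrictions to the factors;
the target need not be commutative. -/
theorem pi_hom_ext {ι : Type*} [Fintype ι] [DecidableEq ι] {N : ι → Type*} [∀ i, Monoid (N i)]
    {M : Type*} [Monoid M] {f g : (∀ i, N i) →* M}
    (h : ∀ i, f.comp (MonoidHom.mulSingle N i) = g.comp (MonoidHom.mulSingle N i)) : f = g :=
  MonoidHom.noncommPiCoprodEquiv.symm.injective (Subtype.ext (funext h))

theorem commute_noncommPiCoprod {ι : Type*} [Fintype ι] {N : ι → Type*} [∀ i, Monoid (N i)]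
    {M : Type*} [Monoid M] (φ : ∀ i, N i →* M)
    (hφ : Pairwise fun i j => ∀ x y, Commute (φ i x) (φ j y)) (z : M) (x : ∀ i, N i)
    (h : ∀ i, Commute z (φ i (x i))) : Commute z (MonoidHom.noncommPiCoprod φ hφ x) :=
  Finset.noncommProd_commute Finset.univ _ (fun _ _ _ _ hij => hφ hij _ _) z
    fun i _ => h i

section Partition

variable {n : ℕ} {P : Fin (n + 1) → Set V}

theorem adj_of_mem_zero (hP : IsCommutingPartition Γ n P) {u v : V} (hu : u ∈ P 0)
    (h : v ≠ u) : Γ.Adj u v := by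
  have hu' := hu
  rw [hP.2.2.1] at hu'
  exact hu' v h

open Classical in
/-- The image of a vertex in the product. If `P` is a commuting partition, exactly one of the
entries, over all `u : P 0` and all `i : Fin n`, is nontrivial. -/
noncomputable def vertexImage (P : Fin (n + 1) → Set V) (v : V) :
    (↥(P 0) → Multiplicative ℤ) × ((i : Fin n) → FreeGroup ↥(P i.succ)) :=
  (fun u => if (u : V) = v then Multiplicative.ofAdd 1 else 1,
    fun i => if h : v ∈ P i.succ then FreeGroup.of ⟨v, h⟩ else 1)

theorem commute_vertexImage (hP : IsCommutingPartition Γ n P) {u v : V} (h : Γ.Adj u v) :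
    Commute (vertexImage P u) (vertexImage P v) := by
  refine Prod.ext (mul_comm _ _) (funext fun i => ?_)
  by_cases hu : u ∈ P i.succ
  · by_cases hv : v ∈ P i.succ
    · exact absurd h (hP.2.2.2.1 _ (Fin.succ_ne_zero i) u hu v hv h.ne)
    · simp [vertexImage, hv]
  · simp [vertexImage, hu]

theorem eq_of_mem (hP : IsCommutingPartition Γ n P) {v : V} {i j : Fin (n + 1)}
    (hi : v ∈ P i) (hj : v ∈ P j) : i = j :=
  (hP.1 v).unique hi hj

open Classical in
theorem vertexImage_zero (hP : IsCommutingPartition Γ n P) (u : ↥(P 0)) :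
    vertexImage P u = (Pi.mulSingle u (Multiplicative.ofAdd 1), 1) := by
  refine Prod.ext (funext fun w => ?_) (funext fun i => ?_)
  · simp [vertexImage, Pi.mulSingle_apply, Subtype.ext_iff]
  · have : (u : V) ∉ P i.succ := fun h => Fin.succ_ne_zero i (eq_of_mem hP h u.2)
    simp [vertexImage, this]

theorem vertexImage_succ (hP : IsCommutingPartition Γ n P) (i : Fin n) (w : ↥(P i.succ)) :
    vertexImage P w = (1, Pi.mulSingle i (FreeGroup.of w)) := by
  refine Prod.ext (funext fun u => ?_) (funext fun j => ?_)
  · have : (u : V) ≠ w := fun h => Fin.succ_ne_zero i (eq_of_mem hP w.2 (h ▸ u.2))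
    simp [vertexImage, this]
  · by_cases hj : j = i
    · subst hj
      simp [vertexImage]
    · have : (w : V) ∉ P j.succ := fun h => hj (Fin.succ_injective _ (eq_of_mem hP h w.2))
      simp [vertexImage, this, hj]

/-- The homomorphism from the graph group to the product of the factors. -/
noncomputable def toProd (hP : IsCommutingPartition Γ n P) :
    GraphGroup Γ →* (↥(P 0) → Multiplicative ℤ) × ((i : Fin n) → FreeGroup ↥(P i.succ)) :=
  lift (vertexImage P) fun _ _ => commute_vertexImage hP

theorem toProd_gen (hP : IsCommutingPartition Γ n P) (v : V) :
    toProd hP (gen Γ v) = vertexImage P v :=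
  lift_gen _ _ v

/-- The homomorphism from the product of the free factors to the graph group. -/
noncomputable def ofFree (hP : IsCommutingPartition Γ n P) :
    ((i : Fin n) → FreeGroup ↥(P i.succ)) →* GraphGroup Γ :=
  MonoidHom.noncommPiCoprod
    (fun i : Fin n => FreeGroup.lift fun w : ↥(P i.succ) => gen Γ (w : V)) (by
    intro i j hij x y
    refine commute_freeGroup_lift _ _ (fun u => ?_) x
    refine (commute_freeGroup_lift _ _ (fun v => ?_) y).symm
    exact commute_gen (hP.2.2.2.2 _ _ (fun h => hij (Fin.succ_injective _ h).symm) _ v.2 _ u.2))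

theorem ofFree_single (hP : IsCommutingPartition Γ n P) (i : Fin n) (w : ↥(P i.succ)) :
    ofFree hP (Pi.mulSingle i (FreeGroup.of w)) = gen Γ (w : V) := by
  exact (MonoidHom.noncommPiCoprod_mulSingle _ _ _).trans (by simp)

variable [Fintype V]

open Classical in
/-- The homomorphism from the free abelian factor to the graph group. -/
noncomputable def ofAbelian (hP : IsCommutingPartition Γ n P) :
    (↥(P 0) → Multiplicative ℤ) →* GraphGroup Γ :=
  MonoidHom.noncommPiCoprod (fun u : ↥(P 0) => zpowersHom (GraphGroup Γ) (gen Γ u)) (by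
    intro u v huv x y
    simp only [zpowersHom_apply]
    exact (commute_gen (adj_of_mem_zero hP u.2
      fun h => huv (Subtype.ext h.symm))).zpow_zpow _ _)

open Classical in
theorem ofAbelian_single (hP : IsCommutingPartition Γ n P) (u : ↥(P 0)) :
    ofAbelian hP (Pi.mulSingle u (Multiplicative.ofAdd 1)) = gen Γ u := by
  exact (MonoidHom.noncommPiCoprod_mulSingle _ _ _).trans (by simp)

theorem commute_ofAbelian_ofFree (hP : IsCommutingPartition Γ n P)
    (x : ↥(P 0) → Multiplicative ℤ) (y : (i : Fin n) → FreeGroup ↥(P i.succ)) :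
    Commute (ofAbelian hP x) (ofFree hP y) := by
  classical
  refine commute_noncommPiCoprod _ _ _ _ fun i => ?_
  refine (commute_noncommPiCoprod _ _ _ _ fun u => ?_).symm
  refine commute_freeGroup_lift _ _ (fun w => ?_) _
  simp only [zpowersHom_apply]
  exact (commute_gen (hP.2.2.2.2 _ _ (Fin.succ_ne_zero i) _ w.2 _ u.2)).zpow_right _

/-- The homomorphism from the product of the factors to the graph group. -/
noncomputable def ofProd (hP : IsCommutingPartition Γ n P) :
    (↥(P 0) → Multiplicative ℤ) × ((i : Fin n) → FreeGroup ↥(P i.succ)) →* GraphGroup Γ :=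
  MonoidHom.noncommCoprod (ofAbelian hP) (ofFree hP) (commute_ofAbelian_ofFree hP)

theorem ofProd_toProd (hP : IsCommutingPartition Γ n P) :
    (ofProd hP).comp (toProd hP) = MonoidHom.id _ := by
  classical
  refine hom_ext fun v => ?_
  obtain ⟨i, hi, -⟩ := hP.1 v
  simp only [MonoidHom.comp_apply, MonoidHom.id_apply, toProd_gen]
  induction i using Fin.cases with
  | zero =>
    rw [vertexImage_zero hP ⟨v, hi⟩]
    simp [ofProd, ofAbelian_single]
  | succ i =>
    rw [vertexImage_succ hP i ⟨v, hi⟩]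
    simp [ofProd, ofFree_single]

theorem toProd_ofProd (hP : IsCommutingPartition Γ n P) :
    (toProd hP).comp (ofProd hP) = MonoidHom.id _ := by
  classical
  have h0 : ((toProd hP).comp (ofProd hP)).comp (MonoidHom.inl _ _) = MonoidHom.inl _ _ := by
    refine pi_hom_ext fun u => MonoidHom.ext_mint ?_
    simp [ofProd, ofAbelian_single, toProd_gen, vertexImage_zero hP]
  have h1 : ((toProd hP).comp (ofProd hP)).comp (MonoidHom.inr _ _) = MonoidHom.inr _ _ := by
    refine pi_hom_ext fun i => FreeGroup.ext_hom _ _ fun w => ?_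
    simp [ofProd, ofFree_single, toProd_gen, vertexImage_succ hP]
  refine MonoidHom.ext fun x => ?_
  have hx : x = MonoidHom.inl _ _ x.1 * MonoidHom.inr _ _ x.2 := by simp
  rw [hx, map_mul, map_mul]
  exact congrArg₂ (· * ·) (DFunLike.congr_fun h0 x.1) (DFunLike.congr_fun h1 x.2)

end Partition

end GraphGroup

theorem graphGroup_of_commuting_partition {V : Type*} [Fintype V] (Γ : SimpleGraph V)
    (n : ℕ) (P : Fin (n + 1) → Set V) (hP : IsCommutingPartition Γ n P) :
    Nonempty (GraphGroup Γ ≃*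
      (Multiplicative (↥(P 0) → ℤ) × ((i : Fin n) → FreeGroup ↥(P i.succ)))) := by
  let e := MonoidHom.toMulEquiv (GraphGroup.toProd hP) (GraphGroup.ofProd hP)
    (GraphGroup.ofProd_toProd hP) (GraphGroup.toProd_ofProd hP)
  exact ⟨e.trans ((MulEquiv.piMultiplicative fun _ : ↥(P 0) => ℤ).symm.prodCongr
    (MulEquiv.refl _))⟩
end

section
/- Let Γ be a finite simple graph in 𝒩ℬ, i.e., with no three distinct vertices a, b, c such that a and b are adjacent while c is adjacent to neither a nor b. Then the graph group G(Γ) is isomorphic to a finite direct product of finitely generated free groups (where ℤ is regarded as the free group of rank one). -/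
/-- The generator of the graph group attached to a vertex. -/
def GraphGroup.of {V : Type*} (Γ : SimpleGraph V) (v : V) : GraphGroup Γ :=
  PresentedGroup.of v

theorem GraphGroup.commute_of {V : Type*} {Γ : SimpleGraph V} {u v : V} (h : Γ.Adj u v) :
    Commute (GraphGroup.of Γ u) (GraphGroup.of Γ v) := by
  have h1 : PresentedGroup.mk (graphGroupRels Γ)
      (FreeGroup.of u * FreeGroup.of v * (FreeGroup.of u)⁻¹ * (FreeGroup.of v)⁻¹) = 1 :=
    PresentedGroup.one_of_mem ⟨u, v, h, rfl⟩
  simp only [map_mul, map_inv] at h1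
  exact mul_inv_eq_iff_eq_mul.mp (mul_inv_eq_one.mp h1)

theorem commute_map_of_forall {α G : Type*} [Group G] (f : FreeGroup α →* G) (g : G)
    (h : ∀ a, Commute (f (FreeGroup.of a)) g) (x : FreeGroup α) : Commute (f x) g := by
  induction x using FreeGroup.induction_on with
  | C1 => simp
  | of a => exact h a
  | inv_of a _ => rw [_root_.map_inv]; exact (h a).inv_left
  | mul x y hx hy => rw [_root_.map_mul]; exact hx.mul_left hy

theorem InNB.exists_coloring {V : Type*} [Finite V] {Γ : SimpleGraph V} (hΓ : InNB Γ) :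
    ∃ (m : ℕ) (c : V → Fin m), ∀ u v, Γ.Adj u v ↔ c u ≠ c v := by
  let s : Setoid V :=
    { r := fun u v => ¬ Γ.Adj u v
      iseqv :=
        { refl := fun u => Γ.irrefl
          symm := fun h h' => h h'.symm
          trans := by
            intro u v w h1 h2 h3
            refine hΓ ⟨u, w, v, h3.ne, ?_, ?_, h3, h1, fun h => h2 h.symm⟩
            · rintro rfl; exact h2 h3
            · rintro rfl; exact h1 h3 } }
  obtain ⟨m, ⟨e⟩⟩ := Finite.exists_equiv_fin (Quotient s)
  refine ⟨m, fun v => e (Quotient.mk s v), fun u v => ?_⟩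
  rw [Ne, e.apply_eq_iff_eq, Quotient.eq]
  exact not_not.symm

section Multipartite

variable {V ι : Type*} {Γ : SimpleGraph V} (c : V → ι)

/-- The homomorphism from the graph group to the product of the free groups on the colour classes,
sending a vertex to its generator in the factor of its colour. -/
def graphGroupToPi [DecidableEq ι] (hc : ∀ u v, Γ.Adj u v ↔ c u ≠ c v) :
    GraphGroup Γ →* ((i : ι) → FreeGroup {v // c v = i}) :=
  PresentedGroup.toGroup (rels := graphGroupRels Γ)
    (f := fun v => Pi.mulSingle (c v) (FreeGroup.of ⟨v, rfl⟩)) (by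
      rintro r ⟨u, v, huv, rfl⟩
      simp only [map_mul, map_inv, FreeGroup.lift_apply_of]
      rw [mul_inv_eq_one, mul_inv_eq_iff_eq_mul]
      exact Pi.mulSingle_commute ((hc u v).1 huv) _ _)

theorem graphGroupToPi_of [DecidableEq ι] (hc : ∀ u v, Γ.Adj u v ↔ c u ≠ c v) (v : V) :
    graphGroupToPi c hc (GraphGroup.of Γ v) =
    Pi.mulSingle (c v) (FreeGroup.of ⟨v, rfl⟩) :=
  PresentedGroup.toGroup.of _

/-- The inclusion of the free group on a colour class into the graph group. -/
def classToGraphGroup (Γ : SimpleGraph V) (i : ι) : FreeGroup {v // c v = i} →* GraphGroup Γ :=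
  FreeGroup.lift fun v => GraphGroup.of Γ v.1

theorem classToGraphGroup_commute (hc : ∀ u v, Γ.Adj u v ↔ c u ≠ c v) :
    Pairwise fun i j => ∀ x y,
      Commute (classToGraphGroup c Γ i x) (classToGraphGroup c Γ j y) := by
  intro i j hij x y
  refine commute_map_of_forall _ _ (fun a => ?_) x
  refine (commute_map_of_forall _ _ (fun b => ?_) y).symm
  simp only [classToGraphGroup, FreeGroup.lift_apply_of]
  refine (GraphGroup.commute_of ((hc _ _).2 ?_)).symm
  rwa [a.2, b.2]

/-- The homomorphism from the product of the free groups on the colour classes to the graph group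
induced by the inclusions of the factors, whose images commute pairwise. -/
def piToGraphGroup [Fintype ι] (hc : ∀ u v, Γ.Adj u v ↔ c u ≠ c v) :
    ((i : ι) → FreeGroup {v // c v = i}) →* GraphGroup Γ :=
  MonoidHom.noncommPiCoprod (classToGraphGroup c Γ) (classToGraphGroup_commute c hc)

theorem piToGraphGroup_mulSingle [Fintype ι] [DecidableEq ι]
    (hc : ∀ u v, Γ.Adj u v ↔ c u ≠ c v) (i : ι) (x : FreeGroup {v // c v = i}) :
    piToGraphGroup c hc (Pi.mulSingle i x) = classToGraphGroup c Γ i x :=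
  MonoidHom.noncommPiCoprod_mulSingle _ _ _

/-- The graph group of a complete multipartite graph is the product of the free groups on its
parts. -/
def graphGroupEquivPi [Fintype ι] [DecidableEq ι] (hc : ∀ u v, Γ.Adj u v ↔ c u ≠ c v) :
    GraphGroup Γ ≃* ((i : ι) → FreeGroup {v // c v = i}) :=
  MonoidHom.toMulEquiv (graphGroupToPi c hc) (piToGraphGroup c hc)
    (by
      refine PresentedGroup.ext (rels := graphGroupRels Γ) fun v => ?_
      change piToGraphGroup c hc (graphGroupToPi c hc (GraphGroup.of Γ v)) = GraphGroup.of Γ v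
      rw [graphGroupToPi_of, piToGraphGroup_mulSingle]
      simp [classToGraphGroup])
    (by
      refine MonoidHom.pi_ext fun i x => ?_
      rw [MonoidHom.comp_apply, piToGraphGroup_mulSingle]
      -- Two homomorphisms out of the free group on the class of `i` agree on generators.
      have h : (graphGroupToPi c hc).comp (classToGraphGroup c Γ i) =
          MonoidHom.mulSingle (fun i => FreeGroup {v // c v = i}) i := by
        ext1 ⟨v, hv⟩
        subst hv
        simp [classToGraphGroup, graphGroupToPi_of]
      exact DFunLike.congr_fun h x)

end Multipartite

theorem graphGroup_of_nb {V : Type*} [Fintype V] (Γ : SimpleGraph V) (hΓ : InNB Γ) :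
    ∃ (m : ℕ) (k : Fin m → ℕ),
      Nonempty (GraphGroup Γ ≃* ((i : Fin m) → FreeGroup (Fin (k i)))) := by
  obtain ⟨m, c, hc⟩ := hΓ.exists_coloring
  exact ⟨m, fun i => Nat.card {v // c v = i}, ⟨(graphGroupEquivPi c hc).trans
    (MulEquiv.piCongrRight fun i => FreeGroup.freeGroupCongr (Finite.equivFin _))⟩⟩
end
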